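/- Let Σ be a symmetric positive definite p×p real matrix, R a symmetric positive definite n×n real matrix, and F a real n×p matrix. Let S = F Σ Fᵀ + R, K = Σ Fᵀ S⁻¹, and let Σ′ = (I − K F) Σ be the Kalman posterior covariance. Then log det((Σ′)⁻¹) − log det(Σ⁻¹) = log det(F Σ Fᵀ + R) − log det R. That is, the Extended Kalman Filter information gain exactly equals the per-step mutual information cost term; minimizing the mutual information cost maximizes the EKF information gain. -/

import Mathlib

open Matrix

/-!
With `S = F Σ Fᵀ + R` and `K = Σ Fᵀ S⁻¹`, Sylvester's identity gives
`det (I − K F) = det (I − F K)`, while `(I − F K) S = S − F Σ Fᵀ = R`. Hence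
`det Σ′ * det S = det Σ * det R`; take logarithms.
-/

section Det

variable {m n α : Type*} [Fintype m] [Fintype n] [DecidableEq n] [CommRing α]

theorem one_sub_mul_mul_inv_mul_add (F : Matrix n m α) (B : Matrix m n α) (R : Matrix n n α)
    (hS : IsUnit (F * B + R).det) :
    (1 - F * (B * (F * B + R)⁻¹)) * (F * B + R) = R :=
  calc (1 - F * (B * (F * B + R)⁻¹)) * (F * B + R)
    _ = F * B + R - F * B * ((F * B + R)⁻¹ * (F * B + R)) := by
      simp only [Matrix.sub_mul, Matrix.one_mul, Matrix.mul_assoc]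
    _ = R := by rw [nonsing_inv_mul _ hS, Matrix.mul_one, add_sub_cancel_left]

variable [DecidableEq m]

theorem det_one_sub_mul_inv_mul_mul_det_add (F : Matrix n m α) (B : Matrix m n α)
    (R : Matrix n n α) (hS : IsUnit (F * B + R).det) :
    (1 - B * (F * B + R)⁻¹ * F).det * (F * B + R).det = R.det := by
  rw [det_one_sub_mul_comm, ← det_mul, one_sub_mul_mul_inv_mul_add F B R hS]

theorem det_posterior_mul_det_innovation (P : Matrix m m α) (F : Matrix n m α) (G : Matrix m n α)
    (R : Matrix n n α) (hS : IsUnit (F * P * G + R).det) :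
    ((1 - P * G * (F * P * G + R)⁻¹ * F) * P).det * (F * P * G + R).det = P.det * R.det := by
  rw [Matrix.mul_assoc F] at hS ⊢
  rw [det_mul, mul_right_comm, det_one_sub_mul_inv_mul_mul_det_add F (P * G) R hS, mul_comm]

end Det

section LogDet

variable {m n : Type*} [Fintype m] [DecidableEq m] [Fintype n] [DecidableEq n]

theorem log_det_inv (A : Matrix m m ℝ) : Real.log A⁻¹.det = -Real.log A.det := by
  rw [det_nonsing_inv, Ring.inverse_eq_inv', Real.log_inv]

theorem stmt_13_general (P : Matrix m m ℝ) (R : Matrix n n ℝ) (F : Matrix n m ℝ)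
    (G : Matrix m n ℝ) (hP : 0 < P.det) (hR : 0 < R.det) (hS : 0 < (F * P * G + R).det) :
    Real.log ((1 - P * G * (F * P * G + R)⁻¹ * F) * P)⁻¹.det - Real.log P⁻¹.det =
      Real.log (F * P * G + R).det - Real.log R.det := by
  have det_eq := det_posterior_mul_det_innovation P F G R hS.ne'.isUnit
  have posterior_det_ne_zero : ((1 - P * G * (F * P * G + R)⁻¹ * F) * P).det ≠ 0 :=
    left_ne_zero_of_mul (det_eq.trans_ne (mul_pos hP hR).ne')
  have log_eq := congrArg Real.log det_eq
  rw [Real.log_mul posterior_det_ne_zero hS.ne', Real.log_mul hP.ne' hR.ne'] at log_eq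
  rw [log_det_inv, log_det_inv]
  linarith

end LogDet

/-- The EKF information gain equals the per-step mutual information cost term: with
`S = F Σ Fᵀ + R`, `K = Σ Fᵀ S⁻¹`, and posterior covariance `Σ′ = (I − K F) Σ`,
`log det((Σ′)⁻¹) − log det(Σ⁻¹) = log det(F Σ Fᵀ + R) − log det R`. -/
theorem stmt_13 {n p : ℕ} (Sig : Matrix (Fin p) (Fin p) ℝ)
    (R : Matrix (Fin n) (Fin n) ℝ) (F : Matrix (Fin n) (Fin p) ℝ)
    (hSig : Sig.PosDef) (hR : R.PosDef) :
    Real.log (((1 - (Sig * Fᵀ * (F * Sig * Fᵀ + R)⁻¹) * F) * Sig)⁻¹).det -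
        Real.log (Sig⁻¹).det =
      Real.log (F * Sig * Fᵀ + R).det - Real.log R.det := by
  have hS : (F * Sig * Fᵀ + R).PosDef := by
    rw [← conjTranspose_eq_transpose_of_trivial]
    exact PosDef.posSemidef_add (hSig.posSemidef.mul_mul_conjTranspose_same F) hR
  exact stmt_13_general Sig R F Fᵀ hSig.det_pos hR.det_pos hS.det_pos
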